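/- Let b ≥ 5 be squarefree and a a positive rational not an integral power of b. Then the cyclomatic complexity of the leading digit sequence S_{a,b}, defined as e − n + p of its transition graph, equals c_{a,b} + 1, where c_{a,b} is the slope of p_{a,b}(n). In particular, the transition graph has p_{a,b}(1) vertices, p_{a,b}(2) edges, and exactly one connected component. -/

import Mathlib

/-- The leading digit of `x` in base `b`: the unique `d ∈ {1,…,b-1}` with
`d · b^k ≤ x < (d+1) · b^k` for some integer `k` (here `k = ⌊log_b x⌋`). -/
noncomputable def leadingDigit (b : ℕ) (x : ℝ) : ℕ :=
  (⌊x / (b : ℝ) ^ (⌊Real.logb b x⌋ : ℤ)⌋).toNat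

/-- The block complexity of the leading digit sequence of `a^n` in base `b`:
the number of distinct blocks of length `n`. -/
noncomputable def blockComplexity (a : ℝ) (b : ℕ) (n : ℕ) : ℕ :=
  Set.ncard {w : Fin n → ℕ |
    ∃ m : ℕ, 1 ≤ m ∧ ∀ i : Fin n, w i = leadingDigit b (a ^ (m + (i : ℕ)))}

/-- Vertices of the transition graph of the leading digit sequence of `a^n` in base
`b`: the digits that occur in the sequence. -/
noncomputable def transVertices (a : ℝ) (b : ℕ) : Set ℕ :=
  {d : ℕ | ∃ m : ℕ, 1 ≤ m ∧ leadingDigit b (a ^ m) = d}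

/-- Edges of the transition graph: pairs of digits occurring consecutively. -/
noncomputable def transEdges (a : ℝ) (b : ℕ) : Set (ℕ × ℕ) :=
  {e : ℕ × ℕ | ∃ m : ℕ, 1 ≤ m ∧
    leadingDigit b (a ^ m) = e.1 ∧ leadingDigit b (a ^ (m + 1)) = e.2}

open Filter Topology in
theorem cc_dense (α : ℝ) (hα : Irrational α) (u v : ℝ) (huv : u < v) :
    ∃ m : ℕ, 1 ≤ m ∧ ∃ j : ℤ, u < m * α - j ∧ m * α - j < v := by
  have hd : DenseRange (fun n : ℤ => n • (α : AddCircle (1:ℝ))) := by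
    have := (AddCircle.denseRange_zsmul_coe_iff (a := α) (p := 1)).2 (by simpa using hα)
    exact this
  have : Fact ((0:ℝ) < 1) := ⟨one_pos⟩
  obtain ⟨w, hw1, hw2⟩ := exists_between huv
  have hcl : (w : AddCircle (1:ℝ)) ∈ (AddSubgroup.zmultiples (α : AddCircle (1:ℝ))).topologicalClosure := by
    have := hd (w : AddCircle (1:ℝ))
    rw [← SetLike.mem_coe, AddSubgroup.topologicalClosure_coe, AddSubgroup.coe_zmultiples]
    exact this
  have hcp := mapClusterPt_atTop_nsmul_iff_mem_topologicalClosure_zmultiples.2 hcl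
  have hopen : IsOpen ((fun t : ℝ => (t : AddCircle (1:ℝ))) '' Set.Ioo u v) :=
    QuotientAddGroup.isOpenMap_coe _ isOpen_Ioo
  have hmem : ((fun t : ℝ => (t : AddCircle (1:ℝ))) '' Set.Ioo u v) ∈ 𝓝 (w : AddCircle (1:ℝ)) :=
    hopen.mem_nhds ⟨w, ⟨hw1, hw2⟩, rfl⟩
  have hfr := (mapClusterPt_iff_frequently.1 hcp) _ hmem
  obtain ⟨m, hm, t, ht, hte⟩ := (frequently_atTop.1 hfr) 1
  refine ⟨m, hm, ?_⟩
  have h2 : ((m * α : ℝ) : AddCircle (1:ℝ)) = (t : AddCircle (1:ℝ)) := by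
    rw [show (t : AddCircle (1:ℝ)) = m • (α : AddCircle (1:ℝ)) from hte, ← nsmul_eq_mul]
    rfl
  have h3 : ((m * α - t : ℝ) : AddCircle (1:ℝ)) = 0 := by
    rw [AddCircle.coe_sub, h2, sub_self]
  obtain ⟨j, hj⟩ := (AddCircle.coe_eq_zero_iff (1:ℝ)).1 h3
  rw [zsmul_eq_mul, mul_one] at hj
  refine ⟨j, ?_, ?_⟩
  · linarith [ht.1]
  · linarith [ht.2]

theorem cc_irr (b : ℕ) (hb : 5 ≤ b) (hsf : Squarefree b) (a : ℝ)
    (r s : ℕ) (k : ℤ) (hr : 0 < r) (hs : 0 < s) (hco : Nat.Coprime r s)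
    (hrep : a = ((r : ℝ) / s) * (b : ℝ) ^ k)
    (h1 : (s : ℝ) < r) (h2 : (r : ℝ) < (b : ℝ) * s) : Irrational (Real.logb b a) := by
  have hb0 : (0:ℝ) < b := by positivity
  have hb1 : (1:ℝ) < b := by exact_mod_cast (by omega : 1 < b)
  have hs0 : (0:ℝ) < s := by positivity
  have hr0 : (0:ℝ) < r := by positivity
  have ha : 0 < a := by rw [hrep]; positivity
  rintro ⟨p, hp⟩
  have hq : 0 < p.den := p.den_pos
  have hlog : Real.logb b ((r:ℝ)/s) = p - k := by
    rw [hp, hrep, Real.logb_mul (by positivity) (by positivity), ← Real.rpow_intCast,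
      Real.logb_rpow hb0 hb1.ne']
    ring
  obtain ⟨N, hN⟩ : ∃ N : ℤ, N = p.num - k * p.den := ⟨_, rfl⟩
  have hN' : Real.logb b ((r:ℝ)/s) * p.den = N := by
    rw [hlog, hN]; push_cast
    have : (p : ℝ) * p.den = p.num := by exact_mod_cast Rat.mul_den_eq_num p
    linarith
  have hl0 : 0 < Real.logb b ((r:ℝ)/s) := Real.logb_pos hb1 (by rw [one_lt_div hs0]; exact h1)
  have hl1 : Real.logb b ((r:ℝ)/s) < 1 := by
    rw [Real.logb_lt_iff_lt_rpow hb1 (by positivity), Real.rpow_one, div_lt_iff₀ hs0]; exact h2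
  have hq' : (0:ℝ) < p.den := by exact_mod_cast hq
  have hNpos : 0 < N := by
    have : (0:ℝ) < N := by rw [← hN']; positivity
    exact_mod_cast this
  have hNlt : N < p.den := by
    have : (N:ℝ) < p.den := by rw [← hN']; nlinarith
    exact_mod_cast this
  obtain ⟨n, rfl⟩ : ∃ n : ℕ, N = n := ⟨N.toNat, by omega⟩
  have hpow : ((r:ℝ)/s)^p.den = (b:ℝ)^n := by
    apply Real.logb_injOn_pos hb1 (Set.mem_Ioi.2 (by positivity)) (Set.mem_Ioi.2 (by positivity))
    rw [Real.logb_pow, Real.logb_pow, Real.logb_self_eq_one hb1]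
    push_cast at hN'
    linarith
  have hnat : r^p.den = b^n * s^p.den := by
    rw [div_pow, div_eq_iff (by positivity)] at hpow
    exact_mod_cast hpow
  have hs1 : s = 1 := by
    have : s^p.den ∣ r^p.den := ⟨b^n, by rw [hnat]; ring⟩
    rw [Nat.pow_dvd_pow_iff hq.ne'] at this
    exact Nat.dvd_one.1 (hco ▸ Nat.dvd_gcd this dvd_rfl)
  subst hs1
  rw [one_pow, mul_one] at hnat
  obtain ⟨π, hπ, hπb⟩ := Nat.exists_prime_and_dvd (n := b) (by omega)
  have hv : b.factorization π = 1 := by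
    have := (Nat.squarefree_iff_factorization_le_one (by omega)).1 hsf π
    have := (hπ.dvd_iff_one_le_factorization (by omega)).1 hπb
    omega
  have := congrArg (fun x => x.factorization π) hnat
  simp [Nat.factorization_pow, hv] at this
  have h3 : p.den ∣ n := ⟨_, this.symm⟩
  have := Nat.le_of_dvd (by omega) h3
  omega

theorem cc_lead (b : ℕ) (hb : 5 ≤ b) (x : ℝ) (j : ℤ) (h1 : 1 ≤ x) (h2 : x < b) :
    leadingDigit b (x * (b:ℝ)^j) = ⌊x⌋₊ := by
  have hb0 : (0:ℝ) < b := by positivity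
  have hb1 : (1:ℝ) < b := by exact_mod_cast (by omega : 1 < b)
  have hx : 0 < x := by linarith
  have : ⌊Real.logb b (x * (b:ℝ)^j)⌋ = j := by
    rw [Real.logb_mul (by positivity) (by positivity), ← Real.rpow_intCast,
      Real.logb_rpow hb0 hb1.ne', Int.floor_eq_iff]
    have := Real.logb_nonneg hb1 h1
    have : Real.logb b x < 1 := by
      rw [Real.logb_lt_iff_lt_rpow hb1 (by positivity), Real.rpow_one]; exact h2
    constructor <;> linarith
  unfold leadingDigit
  rw [this, mul_div_assoc, div_self (by positivity), mul_one, Int.floor_toNat]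

theorem cc_mant (b : ℕ) (hb : 5 ≤ b) (y : ℝ) (hy : 0 < y) :
    ∃ x : ℝ, ∃ j : ℤ, 1 ≤ x ∧ x < b ∧ y = x * (b:ℝ)^j := by
  have hb0 : (0:ℝ) < b := by positivity
  have hb1 : (1:ℝ) < b := by exact_mod_cast (by omega : 1 < b)
  obtain ⟨n, h1, h2⟩ := exists_mem_Ico_zpow hy hb1
  have hp : (0:ℝ) < (b:ℝ)^n := by positivity
  refine ⟨y / (b:ℝ)^n, n, ?_, ?_, ?_⟩
  · rwa [one_le_div hp]
  · rw [div_lt_iff₀ hp]; rw [zpow_add_one₀ hb0.ne'] at h2; linarith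
  · field_simp

theorem cc_hit (b : ℕ) (hb : 5 ≤ b) (a : ℝ) (ha : 0 < a) (hirr : Irrational (Real.logb b a))
    (u v : ℝ) (hu : 1 ≤ u) (huv : u < v) :
    ∃ m : ℕ, 1 ≤ m ∧ ∃ j : ℤ, ∃ x : ℝ, a ^ m = x * (b:ℝ)^j ∧ u < x ∧ x < v := by
  have hb0 : (0:ℝ) < b := by positivity
  have hb1 : (1:ℝ) < b := by exact_mod_cast (by omega : 1 < b)
  obtain ⟨m, hm, j, h1, h2⟩ := cc_dense _ hirr (Real.logb b u) (Real.logb b v)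
    (Real.logb_lt_logb hb1 (by linarith) huv)
  rw [Real.logb_lt_iff_lt_rpow hb1 (by linarith)] at h1
  rw [Real.lt_logb_iff_rpow_lt hb1 (by linarith)] at h2
  refine ⟨m, hm, j, _, ?_, h1, h2⟩
  rw [← Real.rpow_intCast, ← Real.rpow_add hb0, sub_add_cancel, mul_comm, Real.rpow_mul hb0.le,
    Real.rpow_logb hb0 hb1.ne' ha, Real.rpow_natCast]

/-- Multiplication by `ρ` on mantissas in `[1,b)`. -/
noncomputable def ccT (b : ℕ) (ρ x : ℝ) : ℝ := if ρ * x < b then ρ * x else ρ * x / b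

/-- The inverse of `ccT`. -/
noncomputable def ccInv (b : ℕ) (ρ y : ℝ) : ℝ := if ρ ≤ y then y / ρ else b * y / ρ

theorem ccT_range (b : ℕ) (ρ x : ℝ) (h1 : 1 < ρ) (h2 : ρ < b) (hx1 : 1 ≤ x) (hx2 : x < b) :
    1 ≤ ccT b ρ x ∧ ccT b ρ x < b := by
  have hb : (0:ℝ) < b := by linarith
  unfold ccT
  split_ifs with h
  · exact ⟨by nlinarith, h⟩
  · rw [one_le_div hb, div_lt_iff₀ hb]
    exact ⟨by linarith, by nlinarith⟩

theorem ccInv_range (b : ℕ) (ρ y : ℝ) (h1 : 1 < ρ) (h2 : ρ < b) (hx1 : 1 ≤ y) (hx2 : y < b) :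
    1 ≤ ccInv b ρ y ∧ ccInv b ρ y < b := by
  have hρ : 0 < ρ := by linarith
  unfold ccInv
  split_ifs with h
  · rw [one_le_div hρ, div_lt_iff₀ hρ]
    exact ⟨h, by nlinarith⟩
  · rw [one_le_div hρ, div_lt_iff₀ hρ]
    exact ⟨by nlinarith, by nlinarith⟩

theorem ccT_inv (b : ℕ) (ρ y : ℝ) (h1 : 1 < ρ) (h2 : ρ < b) (hx1 : 1 ≤ y) (hx2 : y < b) :
    ccT b ρ (ccInv b ρ y) = y := by
  have hρ : 0 < ρ := by linarith
  have hb : (0:ℝ) < b := by linarith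
  unfold ccInv
  split_ifs with h
  · have e : ρ * (y / ρ) = y := by field_simp
    unfold ccT
    rw [e, if_pos hx2]
  · have e : ρ * (b * y / ρ) = b * y := by field_simp
    unfold ccT
    rw [e, if_neg (by nlinarith)]
    field_simp

theorem ccInv_T (b : ℕ) (ρ x : ℝ) (h1 : 1 < ρ) (h2 : ρ < b) (hx1 : 1 ≤ x) (hx2 : x < b) :
    ccInv b ρ (ccT b ρ x) = x := by
  have hρ : 0 < ρ := by linarith
  have hb : (0:ℝ) < b := by linarith
  unfold ccT
  split_ifs with h
  · unfold ccInv
    rw [if_pos (by nlinarith)]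
    field_simp
  · unfold ccInv
    rw [if_neg]
    · field_simp
    · rw [not_le, div_lt_iff₀ hb]
      nlinarith

/-- The left endpoints of the arcs. -/
noncomputable def ccP (b : ℕ) (ρ : ℝ) : Finset ℝ :=
  (Finset.Icc 1 (b-1)).image (fun d : ℕ => (d:ℝ)) ∪
    (Finset.Icc 1 (b-1)).image (fun d : ℕ => ccInv b ρ d)

theorem cc_memA (b : ℕ) (x : ℝ) :
    x ∈ (Finset.Icc 1 (b-1)).image (fun d : ℕ => (d:ℝ)) ↔
      1 ≤ x ∧ x < b ∧ ∃ d : ℕ, x = d := by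
  simp only [Finset.mem_image, Finset.mem_Icc]
  constructor
  · rintro ⟨d, ⟨h1, h2⟩, rfl⟩
    exact ⟨by exact_mod_cast h1, by exact_mod_cast (by omega : d < b), d, rfl⟩
  · rintro ⟨h1, h2, d, rfl⟩
    have h1' : 1 ≤ d := by exact_mod_cast h1
    have h2' : d < b := by exact_mod_cast h2
    exact ⟨d, ⟨h1', by omega⟩, rfl⟩

theorem cc_memB (b : ℕ) (ρ x : ℝ) (h1 : 1 < ρ) (h2 : ρ < b) :
    x ∈ (Finset.Icc 1 (b-1)).image (fun d : ℕ => ccInv b ρ d) ↔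
      1 ≤ x ∧ x < b ∧ ∃ d : ℕ, ccT b ρ x = d := by
  simp only [Finset.mem_image, Finset.mem_Icc]
  constructor
  · rintro ⟨d, ⟨hd1, hd2⟩, rfl⟩
    have e1 : (1:ℝ) ≤ d := by exact_mod_cast hd1
    have e2 : (d:ℝ) < b := by exact_mod_cast (by omega : d < b)
    have := ccInv_range b ρ d h1 h2 e1 e2
    exact ⟨this.1, this.2, d, ccT_inv b ρ d h1 h2 e1 e2⟩
  · rintro ⟨hx1, hx2, d, hd⟩
    have := ccT_range b ρ x h1 h2 hx1 hx2
    rw [hd] at this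
    have h1' : 1 ≤ d := by exact_mod_cast this.1
    have h2' : d < b := by exact_mod_cast this.2
    exact ⟨d, ⟨h1', by omega⟩, by rw [← hd]; exact ccInv_T b ρ x h1 h2 hx1 hx2⟩

theorem cc_memP (b : ℕ) (ρ x : ℝ) (h1 : 1 < ρ) (h2 : ρ < b) :
    x ∈ ccP b ρ ↔ 1 ≤ x ∧ x < b ∧ ((∃ d : ℕ, x = d) ∨ ∃ d : ℕ, ccT b ρ x = d) := by
  unfold ccP
  rw [Finset.mem_union, cc_memA, cc_memB b ρ x h1 h2]
  tauto

/-- Pair of consecutive digits. -/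
noncomputable def ccF (b : ℕ) (ρ x : ℝ) : ℕ × ℕ := (⌊x⌋₊, ⌊ccT b ρ x⌋₊)

theorem cc_inj_aux (b : ℕ) (hb : 5 ≤ b) (ρ : ℝ) (h1 : 1 < ρ) (h2 : ρ < b) (p q : ℝ)
    (hp : p ∈ ccP b ρ) (hq : q ∈ ccP b ρ) (hF : ccF b ρ p = ccF b ρ q) : ¬ p < q := by
  intro hlt
  rw [cc_memP b ρ _ h1 h2] at hp hq
  obtain ⟨hp1, hp2, -⟩ := hp
  obtain ⟨hq1, hq2, hq3⟩ := hq
  have hb5 : (5:ℝ) ≤ b := by exact_mod_cast hb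
  have hTp := ccT_range b ρ p h1 h2 hp1 hp2
  have hTq := ccT_range b ρ q h1 h2 hq1 hq2
  unfold ccF at hF
  rw [Prod.mk.injEq] at hF
  obtain ⟨e1, e2⟩ := hF
  have f1 : (⌊p⌋₊ : ℝ) ≤ p := Nat.floor_le (by linarith)
  have f2 : q < ⌊p⌋₊ + 1 := by rw [e1]; exact Nat.lt_floor_add_one q
  rcases hq3 with ⟨d, hd⟩ | ⟨d, hd⟩
  · rw [hd, Nat.floor_natCast] at e1
    rw [e1, ← hd] at f1
    linarith
  · have g1 : (⌊ccT b ρ p⌋₊ : ℝ) ≤ ccT b ρ p := Nat.floor_le (by linarith)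
    have g2 := Nat.lt_floor_add_one (ccT b ρ p)
    rw [e2, hd, Nat.floor_natCast] at g1 g2
    have hd1 : (1:ℝ) ≤ d := by rw [← hd]; exact hTq.1
    unfold ccT at hd g1 g2
    have m1 : ρ * p < ρ * q := by nlinarith
    have m2 : ρ * q < 2 * (ρ * p) := by nlinarith
    have hb0 : (0:ℝ) < b := by linarith
    split_ifs at hd g1 g2 with k1 k2 k2
    · linarith
    · rw [le_div_iff₀ hb0] at g1
      linarith
    · rw [div_eq_iff hb0.ne'] at hd
      nlinarith
    · have := (div_lt_div_iff_of_pos_right hb0).2 m1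
      linarith

theorem cc_injOn (b : ℕ) (hb : 5 ≤ b) (ρ : ℝ) (h1 : 1 < ρ) (h2 : ρ < b) :
    Set.InjOn (ccF b ρ) (ccP b ρ : Set ℝ) := by
  intro p hp q hq h
  have a1 := cc_inj_aux b hb ρ h1 h2 p q hp hq h
  have a2 := cc_inj_aux b hb ρ h1 h2 q p hq hp h.symm
  exact le_antisymm (not_lt.1 a2) (not_lt.1 a1)

theorem cc_floor (x y : ℝ) (h1 : (⌊x⌋₊ : ℝ) ≤ y) (h2 : y < ⌊x⌋₊ + 1) : ⌊y⌋₊ = ⌊x⌋₊ := by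
  rw [Nat.floor_eq_iff (le_trans (by positivity) h1)]
  exact ⟨h1, h2⟩

theorem cc_surj (b : ℕ) (ρ : ℝ) (h1 : 1 < ρ) (h2 : ρ < b) (x : ℝ)
    (hx1 : 1 ≤ x) (hx2 : x < b) : ∃ p ∈ ccP b ρ, ccF b ρ p = ccF b ρ x := by
  have hb0 : (0:ℝ) < b := by linarith
  have hρ : 0 < ρ := by linarith
  have hT := ccT_range b ρ x h1 h2 hx1 hx2
  obtain ⟨d, hd⟩ : ∃ d, d = ⌊x⌋₊ := ⟨_, rfl⟩
  obtain ⟨d', hd'⟩ : ∃ d', d' = ⌊ccT b ρ x⌋₊ := ⟨_, rfl⟩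
  have f1 : (d : ℝ) ≤ x := by rw [hd]; exact Nat.floor_le (by linarith)
  have f2 : x < d + 1 := by rw [hd]; exact Nat.lt_floor_add_one x
  have g1 : (d' : ℝ) ≤ ccT b ρ x := by rw [hd']; exact Nat.floor_le (by linarith)
  have g2 : ccT b ρ x < d' + 1 := by rw [hd']; exact Nat.lt_floor_add_one _
  have f0 : (1:ℝ) ≤ d := by
    have : 1 ≤ d := by rw [hd]; exact Nat.le_floor (by simpa using hx1)
    exact_mod_cast this
  have g0 : (1:ℝ) ≤ d' := by
    have : 1 ≤ d' := by rw [hd']; exact Nat.le_floor (by simpa using hT.1)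
    exact_mod_cast this
  -- sufficient condition
  have key : ∀ p : ℝ, d ≤ p → p ≤ x → (p = d ∨ ccT b ρ p = d') →
      (d' : ℝ) ≤ ccT b ρ p → ccT b ρ p ≤ ccT b ρ x → ∃ p ∈ ccP b ρ, ccF b ρ p = ccF b ρ x := by
    intro p hp1 hp2 hp3 hp4 hp5
    refine ⟨p, (cc_memP b ρ p h1 h2).2 ⟨by linarith, by linarith, ?_⟩, ?_⟩
    · rcases hp3 with h | h
      · exact Or.inl ⟨d, h⟩
      · exact Or.inr ⟨d', h⟩
    · unfold ccF
      rw [cc_floor x p (by rw [← hd]; linarith) (by rw [← hd]; linarith),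
        cc_floor (ccT b ρ x) (ccT b ρ p) (by rw [← hd']; linarith) (by rw [← hd']; linarith)]
  by_cases hc : ρ * x < b
  · have eT : ∀ y, y ≤ x → ccT b ρ y = ρ * y := by
      intro y hy
      unfold ccT
      rw [if_pos (by nlinarith)]
    rw [eT x le_rfl] at g1 g2
    by_cases hq : (d:ℝ) ≤ d' / ρ
    · have hqx : d' / ρ ≤ x := by rw [div_le_iff₀ hρ]; linarith
      have e : ccT b ρ (d'/ρ) = d' := by rw [eT _ hqx]; field_simp
      refine key (d'/ρ) hq hqx (Or.inr e) e.ge ?_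
      rw [e, eT x le_rfl]; exact g1
    · rw [not_le, div_lt_iff₀ hρ] at hq
      refine key d le_rfl f1 (Or.inl rfl) ?_ ?_
      · rw [eT _ f1]; linarith
      · rw [eT _ f1, eT _ le_rfl]; nlinarith
  · have eT : ∀ y, b ≤ ρ * y → ccT b ρ y = ρ * y / b := by
      intro y hy
      unfold ccT
      rw [if_neg (by linarith)]
    rw [eT x (by linarith)] at g1 g2
    by_cases hq : (d:ℝ) ≤ b * d' / ρ
    · have hqx : b * d' / ρ ≤ x := by
        rw [div_le_iff₀ hρ]; rw [le_div_iff₀ hb0] at g1; linarith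
      have e0 : ρ * (b * d' / ρ) = b * d' := by field_simp
      have e : ccT b ρ (b * d'/ρ) = d' := by
        rw [eT _ (by rw [e0]; nlinarith), e0]; field_simp
      refine key (b * d'/ρ) hq hqx (Or.inr e) e.ge ?_
      rw [e, eT x (by linarith)]; exact g1
    · rw [not_le, div_lt_iff₀ hρ] at hq
      have hbd : (b:ℝ) ≤ ρ * d := by nlinarith
      refine key d le_rfl f1 (Or.inl rfl) ?_ ?_
      · rw [eT _ hbd, le_div_iff₀ hb0]; linarith
      · rw [eT _ hbd, eT x (by linarith)]
        exact div_le_div_of_nonneg_right (by nlinarith) hb0.le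

/-- `ccF` is right-continuous. -/
theorem cc_right (b : ℕ) (ρ : ℝ) (h1 : 1 < ρ) (h2 : ρ < b) (p : ℝ)
    (hx1 : 1 ≤ p) (hx2 : p < b) :
    ∃ v, p < v ∧ v ≤ b ∧ ∀ x, p < x → x < v → ccF b ρ x = ccF b ρ p := by
  have hb0 : (0:ℝ) < b := by linarith
  have hρ : 0 < ρ := by linarith
  have hT := ccT_range b ρ p h1 h2 hx1 hx2
  have f1 : (⌊p⌋₊ : ℝ) ≤ p := Nat.floor_le (by linarith)
  have f2 := Nat.lt_floor_add_one p
  have g1 : (⌊ccT b ρ p⌋₊ : ℝ) ≤ ccT b ρ p := Nat.floor_le (by linarith)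
  have g2 := Nat.lt_floor_add_one (ccT b ρ p)
  have f3 : (⌊p⌋₊ : ℝ) + 1 ≤ b := by
    have : ⌊p⌋₊ < b := (Nat.floor_lt (by linarith)).2 hx2
    exact_mod_cast this
  have g3 : (⌊ccT b ρ p⌋₊ : ℝ) + 1 ≤ b := by
    have : ⌊ccT b ρ p⌋₊ < b := (Nat.floor_lt (by linarith)).2 hT.2
    exact_mod_cast this
  by_cases hc : ρ * p < b
  · have eT : ccT b ρ p = ρ * p := by unfold ccT; rw [if_pos hc]
    refine ⟨min (⌊p⌋₊ + 1) ((⌊ccT b ρ p⌋₊ + 1) / ρ), lt_min f2 ?_, (min_le_left _ _).trans f3, ?_⟩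
    · rw [lt_div_iff₀ hρ]; linarith
    · intro x hpx hxv
      rw [lt_min_iff, lt_div_iff₀ hρ] at hxv
      have m : ρ * p < ρ * x := by nlinarith
      have eTx : ccT b ρ x = ρ * x := by unfold ccT; rw [if_pos (by linarith)]
      unfold ccF
      rw [cc_floor p x (by linarith) hxv.1, cc_floor (ccT b ρ p) (ccT b ρ x) (by linarith)
        (by linarith)]
  · have eT : ccT b ρ p = ρ * p / b := by unfold ccT; rw [if_neg hc]
    refine ⟨min (⌊p⌋₊ + 1) ((⌊ccT b ρ p⌋₊ + 1) * b / ρ), lt_min f2 ?_,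
      (min_le_left _ _).trans f3, ?_⟩
    · rw [lt_div_iff₀ hρ]
      have : ρ * p / b < ⌊ccT b ρ p⌋₊ + 1 := by rw [← eT]; exact g2
      rw [div_lt_iff₀ hb0] at this; linarith
    · intro x hpx hxv
      rw [lt_min_iff, lt_div_iff₀ hρ] at hxv
      have m : ρ * p < ρ * x := by nlinarith
      have eTx : ccT b ρ x = ρ * x / b := by unfold ccT; rw [if_neg (by linarith)]
      have m' := (div_lt_div_iff_of_pos_right hb0).2 m
      unfold ccF
      rw [cc_floor p x (by linarith) hxv.1, cc_floor (ccT b ρ p) (ccT b ρ x) (by linarith)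
        (by rw [eTx, div_lt_iff₀ hb0]; linarith)]

theorem cc_cardA (b : ℕ) :
    ((Finset.Icc 1 (b-1)).image (fun d : ℕ => (d:ℝ))).card = b - 1 := by
  rw [Finset.card_image_of_injective _ Nat.cast_injective]
  simp

theorem cc_cardB (b : ℕ) (ρ : ℝ) (h1 : 1 < ρ) (h2 : ρ < b) :
    ((Finset.Icc 1 (b-1)).image (fun d : ℕ => ccInv b ρ d)).card = b - 1 := by
  rw [Finset.card_image_of_injOn]
  · simp
  · intro x hx y hy h
    simp only [Finset.coe_Icc, Set.mem_Icc] at hx hy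
    have hx1 : (1:ℝ) ≤ x := by exact_mod_cast hx.1
    have hx2 : (x:ℝ) < b := by exact_mod_cast (by omega : x < b)
    have hy1 : (1:ℝ) ≤ y := by exact_mod_cast hy.1
    have hy2 : (y:ℝ) < b := by exact_mod_cast (by omega : y < b)
    have h' := congrArg (ccT b ρ) h
    simp only [ccT_inv b ρ x h1 h2 hx1 hx2, ccT_inv b ρ y h1 h2 hy1 hy2] at h'
    exact_mod_cast h'

theorem cc_cardI (b : ℕ) (hb : 5 ≤ b) (r s : ℕ) (hr : 0 < r) (hs : 0 < s)
    (hco : Nat.Coprime r s) (h1 : s < r) (h2 : r < b * s) :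
    ((Finset.Icc 1 (b-1)).image (fun d : ℕ => (d:ℝ)) ∩
    (Finset.Icc 1 (b-1)).image (fun d : ℕ => ccInv b ((r:ℝ)/s) d)).card =
      (b-1)/r + (Nat.gcd b r - 1)/s := by
  have hb0 : 0 < b := by omega
  obtain ⟨g, b', r', hg, hcop, hbe, hre⟩ :=
    Nat.exists_coprime' (m := b) (n := r) (Nat.gcd_pos_of_pos_left _ hb0)
  have hgg : Nat.gcd b r = g := by
    rw [hbe, hre, Nat.gcd_mul_right, hcop, one_mul]
  rw [hgg]
  have hb' : 0 < b' := by rcases Nat.eq_zero_or_pos b' with h | h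
                          · simp [h] at hbe; omega
                          · exact h
  have hr' : 0 < r' := by rcases Nat.eq_zero_or_pos r' with h | h
                          · simp [h] at hre; omega
                          · exact h
  have hsR : (0:ℝ) < s := by exact_mod_cast hs
  have hbR : (0:ℝ) < b := by exact_mod_cast hb0
  have hρ1 : 1 < (r:ℝ)/s := by rw [one_lt_div hsR]; exact_mod_cast h1
  have hρ2 : (r:ℝ)/s < b := by rw [div_lt_iff₀ hsR]; exact_mod_cast h2
  have hcross : r * b' = r' * b := by rw [hbe, hre]; ring
  have hset : ((Finset.Icc 1 (b-1)).image (fun d : ℕ => (d:ℝ)) ∩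
      (Finset.Icc 1 (b-1)).image (fun d : ℕ => ccInv b ((r:ℝ)/s) d)) =
      ((Finset.Icc 1 ((b-1)/r)).image (fun t => s * t) ∪
        (Finset.Icc 1 ((g-1)/s)).image (fun t => b' * s * t)).image (fun d : ℕ => (d:ℝ)) := by
    ext x
    rw [Finset.mem_inter, cc_memA, cc_memB b _ x hρ1 hρ2]
    simp only [Finset.mem_image, Finset.mem_union, Finset.mem_Icc]
    constructor
    · rintro ⟨⟨hx1, hx2, d, rfl⟩, -, -, e, he⟩
      have hT := ccT_range b _ (d:ℝ) hρ1 hρ2 hx1 hx2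
      rw [he] at hT
      have hd1 : 1 ≤ d := by exact_mod_cast hx1
      have hd2 : d < b := by exact_mod_cast hx2
      have he1 : 1 ≤ e := by exact_mod_cast hT.1
      have he2 : e < b := by exact_mod_cast hT.2
      refine ⟨d, ?_, rfl⟩
      unfold ccT at he
      split_ifs at he with hc
      · left
        have e1 : r * d = e * s := by
          field_simp at he
          rw [mul_comm e s]
          exact_mod_cast he
        have : s ∣ d := hco.symm.dvd_of_dvd_mul_left ⟨e, by rw [e1]; ring⟩
        obtain ⟨t, rfl⟩ := this
        have e2 : r * t = e := by
          apply Nat.eq_of_mul_eq_mul_right hs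
          rw [← e1]; ring
        refine ⟨t, ⟨Nat.pos_of_mul_pos_left hd1, ?_⟩, rfl⟩
        rw [Nat.le_div_iff_mul_le hr, mul_comm]
        omega
      · right
        have e1 : r * d = e * s * b := by
          field_simp at he
          have : (r:ℝ) * d = e * s * b := by linarith
          exact_mod_cast this
        have e2 : r' * d = b' * s * e := by
          apply Nat.eq_of_mul_eq_mul_right hg
          calc r' * d * g = r * d := by rw [hre]; ring
            _ = e * s * b := e1
            _ = b' * s * e * g := by rw [hbe]; ring
        have c1 : Nat.Coprime (b' * s) r' := by
          apply Nat.Coprime.mul_left hcop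
          exact (Nat.Coprime.coprime_dvd_left ⟨g, hre⟩ hco).symm
        have : b' * s ∣ d := c1.dvd_of_dvd_mul_left ⟨e, e2⟩
        obtain ⟨t, rfl⟩ := this
        refine ⟨t, ⟨Nat.pos_of_mul_pos_left hd1, ?_⟩, rfl⟩
        rw [Nat.le_div_iff_mul_le hs]
        have : t * s < g := by
          apply Nat.lt_of_mul_lt_mul_left (a := b')
          calc b' * (t * s) = b' * s * t := by ring
            _ < b := hd2
            _ = b' * g := hbe
        omega
    · rintro ⟨d, h, rfl⟩
      have main : 1 ≤ d ∧ d < b ∧ ∃ e : ℕ, ccT b ((r:ℝ)/s) (d:ℝ) = e := by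
        rcases h with ⟨t, ⟨ht1, ht2⟩, rfl⟩ | ⟨t, ⟨ht1, ht2⟩, rfl⟩
        · rw [Nat.le_div_iff_mul_le hr] at ht2
          refine ⟨Nat.mul_pos hs ht1, by nlinarith [Nat.sub_lt hb0 one_pos], r * t, ?_⟩
          have e0 : (r:ℝ)/s * ((s * t : ℕ) : ℝ) = ((r * t : ℕ) : ℝ) := by
            push_cast; field_simp
          unfold ccT
          rw [e0, if_pos]
          have : r * t < b := by rw [mul_comm]; omega
          exact_mod_cast this
        · rw [Nat.le_div_iff_mul_le hs] at ht2
          refine ⟨Nat.mul_pos (Nat.mul_pos hb' hs) ht1, ?_, r' * t, ?_⟩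
          · have : t * s < g := by omega
            calc b' * s * t = b' * (t * s) := by ring
              _ < b' * g := Nat.mul_lt_mul_of_pos_left this hb'
              _ = b := hbe.symm
          · have e0 : (r:ℝ)/s * ((b' * s * t : ℕ) : ℝ) = ((r' * t : ℕ) : ℝ) * b := by
              have : (r:ℝ) * b' = r' * b := by exact_mod_cast hcross
              push_cast; field_simp
              exact this
            unfold ccT
            rw [e0, if_neg]
            · field_simp
            · rw [not_lt]
              have : 1 * b ≤ r' * t * b := Nat.mul_le_mul_right _ (Nat.mul_pos hr' ht1)
              rw [one_mul] at this
              exact_mod_cast this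
      obtain ⟨m1, m2, m3⟩ := main
      have m1' : (1:ℝ) ≤ d := by exact_mod_cast m1
      have m2' : (d:ℝ) < b := by exact_mod_cast m2
      exact ⟨⟨m1', m2', d, rfl⟩, m1', m2', m3⟩
  rw [hset, Finset.card_image_of_injective _ Nat.cast_injective, Finset.card_union_of_disjoint,
    Finset.card_image_of_injective, Finset.card_image_of_injective]
  · simp
  · intro x y h
    exact Nat.eq_of_mul_eq_mul_left (Nat.mul_pos hb' hs) h
  · intro x y h
    exact Nat.eq_of_mul_eq_mul_left hs h
  · rw [Finset.disjoint_left]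
    intro d hd1 hd2
    simp only [Finset.mem_image, Finset.mem_Icc] at hd1 hd2
    obtain ⟨t, ⟨ht1, ht2⟩, rfl⟩ := hd1
    obtain ⟨t', ⟨ht1', ht2'⟩, h⟩ := hd2
    rw [Nat.le_div_iff_mul_le hr] at ht2
    have e1 : t = b' * t' := by
      apply Nat.eq_of_mul_eq_mul_left hs
      rw [← h]; ring
    have e2 : t * r = r' * t' * b := by
      rw [e1]
      calc b' * t' * r = r * b' * t' := by ring
        _ = _ := by rw [hcross]; ring
    have : 1 * b ≤ r' * t' * b := Nat.mul_le_mul_right _ (Nat.mul_pos hr' ht1')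
    omega

theorem cc_cardP (b : ℕ) (hb : 5 ≤ b) (r s : ℕ) (hr : 0 < r) (hs : 0 < s)
    (hco : Nat.Coprime r s) (h1 : s < r) (h2 : r < b * s) :
    (ccP b ((r:ℝ)/s)).card + ((b-1)/r + (Nat.gcd b r - 1)/s) = (b - 1) + (b - 1) := by
  have hsR : (0:ℝ) < s := by exact_mod_cast hs
  have hρ1 : 1 < (r:ℝ)/s := by rw [one_lt_div hsR]; exact_mod_cast h1
  have hρ2 : (r:ℝ)/s < b := by rw [div_lt_iff₀ hsR]; exact_mod_cast h2
  rw [← cc_cardI b hb r s hr hs hco h1 h2]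
  unfold ccP
  rw [Finset.card_union_add_card_inter, cc_cardA, cc_cardB b _ hρ1 hρ2]

/-- The digit pairs along the orbit are given by `ccF`. -/
theorem cc_step (b : ℕ) (hb : 5 ≤ b) (a ρ : ℝ) (k : ℤ) (h1 : 1 < ρ) (h2 : ρ < b)
    (hrep : a = ρ * (b:ℝ)^k) (m : ℕ) (x : ℝ) (j : ℤ) (hx1 : 1 ≤ x) (hx2 : x < b)
    (h : a ^ m = x * (b:ℝ)^j) :
    (leadingDigit b (a^m), leadingDigit b (a^(m+1))) = ccF b ρ x := by
  have hb0 : (b:ℝ) ≠ 0 := by linarith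
  have hT := ccT_range b ρ x h1 h2 hx1 hx2
  unfold ccF
  rw [h, cc_lead b hb x j hx1 hx2]
  congr 1
  by_cases hc : ρ * x < b
  · have : a ^ (m+1) = ccT b ρ x * (b:ℝ)^(j+k) := by
      unfold ccT
      rw [if_pos hc, pow_succ, h, hrep, zpow_add₀ hb0]; ring
    rw [this, cc_lead b hb _ _ hT.1 hT.2]
  · have : a ^ (m+1) = ccT b ρ x * (b:ℝ)^(j+k+1) := by
      unfold ccT
      rw [if_neg hc, pow_succ, h, hrep, zpow_add₀ hb0, zpow_add₀ hb0, zpow_one]; field_simp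
    rw [this, cc_lead b hb _ _ hT.1 hT.2]

theorem cc_hitF (b : ℕ) (hb : 5 ≤ b) (a ρ : ℝ) (k : ℤ) (h1 : 1 < ρ) (h2 : ρ < b)
    (hrep : a = ρ * (b:ℝ)^k) (ha : 0 < a) (hirr : Irrational (Real.logb b a))
    (p : ℝ) (hx1 : 1 ≤ p) (hx2 : p < b) :
    ∃ m : ℕ, 1 ≤ m ∧ (leadingDigit b (a^m), leadingDigit b (a^(m+1))) = ccF b ρ p := by
  obtain ⟨v, hv1, hv2, hv⟩ := cc_right b ρ h1 h2 p hx1 hx2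
  obtain ⟨m, hm, j, x, hx, hpx, hxv⟩ := cc_hit b hb a ha hirr p v hx1 hv1
  refine ⟨m, hm, ?_⟩
  rw [cc_step b hb a ρ k h1 h2 hrep m x j (by linarith) (by linarith) hx, hv x hpx hxv]

theorem cc_edges (b : ℕ) (hb : 5 ≤ b) (a ρ : ℝ) (k : ℤ) (h1 : 1 < ρ) (h2 : ρ < b)
    (hrep : a = ρ * (b:ℝ)^k) (ha : 0 < a) (hirr : Irrational (Real.logb b a)) :
    transEdges a b = ccF b ρ '' (ccP b ρ : Set ℝ) := by
  ext ⟨d, d'⟩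
  constructor
  · rintro ⟨m, hm, e1, e2⟩
    obtain ⟨x, j, hx1, hx2, hx⟩ := cc_mant b hb (a^m) (by positivity)
    have hs := cc_step b hb a ρ k h1 h2 hrep m x j hx1 hx2 hx
    obtain ⟨p, hp, hpe⟩ := cc_surj b ρ h1 h2 x hx1 hx2
    refine ⟨p, hp, ?_⟩
    rw [hpe, ← hs, e1, e2]
  · rintro ⟨p, hp, he⟩
    have hp' := (cc_memP b ρ p h1 h2).1 hp
    obtain ⟨m, hm, hmm⟩ := cc_hitF b hb a ρ k h1 h2 hrep ha hirr p hp'.1 hp'.2.1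
    rw [he, Prod.mk.injEq] at hmm
    exact ⟨m, hm, hmm.1, hmm.2⟩

theorem cc_vertices (b : ℕ) (hb : 5 ≤ b) (a ρ : ℝ) (k : ℤ) (h1 : 1 < ρ) (h2 : ρ < b)
    (hrep : a = ρ * (b:ℝ)^k) (ha : 0 < a) (hirr : Irrational (Real.logb b a)) :
    transVertices a b = (Finset.Icc 1 (b-1) : Set ℕ) := by
  ext d
  simp only [Finset.coe_Icc, Set.mem_Icc]
  constructor
  · rintro ⟨m, hm, rfl⟩
    obtain ⟨x, j, hx1, hx2, hx⟩ := cc_mant b hb (a^m) (by positivity)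
    rw [hx, cc_lead b hb x j hx1 hx2]
    have : ⌊x⌋₊ < b := (Nat.floor_lt (by linarith)).2 hx2
    exact ⟨Nat.le_floor (by simpa using hx1), by omega⟩
  · rintro ⟨hd1, hd2⟩
    have hd1' : (1:ℝ) ≤ d := by exact_mod_cast hd1
    have hd2' : (d:ℝ) < b := by exact_mod_cast (by omega : d < b)
    obtain ⟨m, hm, hmm⟩ := cc_hitF b hb a ρ k h1 h2 hrep ha hirr d hd1' hd2'
    unfold ccF at hmm
    rw [Prod.mk.injEq, Nat.floor_natCast] at hmm
    exact ⟨m, hm, hmm.1⟩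

theorem cc_block1 (a : ℝ) (b : ℕ) : (transVertices a b).ncard = blockComplexity a b 1 := by
  unfold blockComplexity
  rw [← Set.ncard_image_of_injective (transVertices a b)
    (f := fun d => (fun _ : Fin 1 => d)) (fun x y h => congrFun h 0)]
  congr 1
  ext w
  constructor
  · rintro ⟨d, ⟨m, hm, rfl⟩, rfl⟩
    exact ⟨m, hm, fun i => by simp⟩
  · rintro ⟨m, hm, h⟩
    refine ⟨w 0, ⟨m, hm, by simpa using (h 0).symm⟩, ?_⟩
    funext i
    rw [Subsingleton.elim i 0]

theorem cc_block2 (a : ℝ) (b : ℕ) : (transEdges a b).ncard = blockComplexity a b 2 := by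
  unfold blockComplexity
  rw [← Set.ncard_image_of_injective (transEdges a b)
    (f := fun e : ℕ × ℕ => (![e.1, e.2] : Fin 2 → ℕ))
    (fun x y h => Prod.ext (congrFun h 0) (congrFun h 1))]
  congr 1
  ext w
  constructor
  · rintro ⟨⟨d, d'⟩, ⟨m, hm, h1, h2⟩, rfl⟩
    refine ⟨m, hm, fun i => ?_⟩
    fin_cases i
    · simpa using h1.symm
    · simpa using h2.symm
  · rintro ⟨m, hm, h⟩
    refine ⟨(w 0, w 1), ⟨m, hm, by simpa using (h 0).symm, by simpa using (h 1).symm⟩, ?_⟩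
    funext i
    fin_cases i <;> rfl

theorem cc_conn (a : ℝ) (b : ℕ) : ∀ x ∈ transVertices a b, ∀ y ∈ transVertices a b,
      Relation.ReflTransGen
        (fun u v => (u, v) ∈ transEdges a b ∨ (v, u) ∈ transEdges a b) x y := by
  have step : ∀ n m : ℕ, 1 ≤ m → Relation.ReflTransGen
        (fun u v => (u, v) ∈ transEdges a b ∨ (v, u) ∈ transEdges a b)
        (leadingDigit b (a^m)) (leadingDigit b (a^(m+n))) := by
    intro n m hm
    induction n with
    | zero => exact Relation.ReflTransGen.refl
    | succ n ih => exact ih.tail (Or.inl ⟨m + n, by omega, rfl, rfl⟩)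
  have hsymm : Std.Symm (fun u v => (u, v) ∈ transEdges a b ∨ (v, u) ∈ transEdges a b) :=
    ⟨fun u v h => h.symm⟩
  rintro x ⟨m, hm, rfl⟩ y ⟨m', hm', rfl⟩
  rcases le_total m m' with h | h
  · obtain ⟨n, rfl⟩ := Nat.exists_eq_add_of_le h
    exact step n m hm
  · obtain ⟨n, rfl⟩ := Nat.exists_eq_add_of_le h
    have hback := step n m' hm'
    exact Std.Symm.symm _ _ hback

/-- Cyclomatic complexity: For squarefree `b ≥ 5` and positive
rational `a` not an integral power of `b` (written `a = (r/s)·b^k` in lowest terms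
with `1 < r/s < b`), the transition graph of the leading digit sequence has
`p_{a,b}(1)` vertices, `p_{a,b}(2)` edges, exactly one connected component, and its
cyclomatic complexity `e - n + p` equals `c_{a,b} + 1` where
`c_{a,b} = b - 1 - ⌊(b-1)/r⌋ - ⌊(gcd(b,r)-1)/s⌋`. -/
theorem cyclomatic_complexity (b : ℕ) (hb : 5 ≤ b) (hsf : Squarefree b)
    (a : ℚ) (ha : 0 < a) (hnp : ∀ j : ℤ, (a : ℝ) ≠ (b : ℝ) ^ j)
    (r s : ℕ) (k : ℤ) (hr : 0 < r) (hs : 0 < s) (hco : Nat.Coprime r s)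
    (hrep : (a : ℝ) = ((r : ℝ) / s) * (b : ℝ) ^ k)
    (h1 : (s : ℝ) < r) (h2 : (r : ℝ) < (b : ℝ) * s) :
    (transVertices (a : ℝ) b).ncard = blockComplexity (a : ℝ) b 1 ∧
    (transEdges (a : ℝ) b).ncard = blockComplexity (a : ℝ) b 2 ∧
    (∀ x ∈ transVertices (a : ℝ) b, ∀ y ∈ transVertices (a : ℝ) b,
      Relation.ReflTransGen
        (fun u v => (u, v) ∈ transEdges (a : ℝ) b ∨ (v, u) ∈ transEdges (a : ℝ) b)
        x y) ∧
    ((transEdges (a : ℝ) b).ncard : ℤ) - (transVertices (a : ℝ) b).ncard + 1 =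
      ((b : ℤ) - 1 - ((b - 1) / r : ℕ) - ((Nat.gcd b r - 1) / s : ℕ)) + 1 := by
  have hs' : s < r := by exact_mod_cast h1
  have hr' : r < b * s := by exact_mod_cast h2
  have hsR : (0:ℝ) < s := by exact_mod_cast hs
  have hρ1 : 1 < (r:ℝ)/s := by rw [one_lt_div hsR]; exact h1
  have hρ2 : (r:ℝ)/s < b := by rw [div_lt_iff₀ hsR]; exact h2
  have ha' : (0:ℝ) < a := by exact_mod_cast ha
  have hirr := cc_irr b hb hsf (a:ℝ) r s k hr hs hco hrep h1 h2
  refine ⟨cc_block1 _ _, cc_block2 _ _, cc_conn _ _, ?_⟩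
  have hE : (transEdges (a:ℝ) b).ncard = (ccP b ((r:ℝ)/s)).card := by
    rw [cc_edges b hb a _ k hρ1 hρ2 hrep ha' hirr, Set.ncard_image_of_injOn
      (cc_injOn b hb _ hρ1 hρ2), Set.ncard_coe_finset]
  have hV : (transVertices (a:ℝ) b).ncard = b - 1 := by
    rw [cc_vertices b hb a _ k hρ1 hρ2 hrep ha' hirr, Set.ncard_coe_finset]
    simp
  have hP := cc_cardP b hb r s hr hs hco hs' hr'
  rw [hE, hV]
  generalize (b-1)/r = A at *
  generalize (Nat.gcd b r - 1)/s = B at *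
  omega
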